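/- Let q be a prime power, and let g ∈ F_q[x] be a monic polynomial of degree k > 0 such that g divides x^{2k} + 1 and g divides x^{2k} - b·x^i - c with b, c ≠ 0 and 0 < i < 2k. Then i = k, c + 1 ≠ 0, and g(x) = x^k - a for some a ≠ 0 in F_q (specifically a = -(c+1)·b^{-1}). -/

import Mathlib

open Polynomial

theorem stmt_6 {F : Type*} [Field F] [Fintype F] (k i : ℕ) (hk : 0 < k)
    (b c : F) (hb : b ≠ 0) (hc : c ≠ 0) (hi : 0 < i) (hik : i < 2 * k)
    (g : F[X]) (hmonic : g.Monic) (hdeg : g.natDegree = k)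
    (h1 : g ∣ X ^ (2 * k) + 1)
    (h2 : g ∣ X ^ (2 * k) - C b * X ^ i - C c) :
    i = k ∧ c + 1 ≠ 0 ∧ g = X ^ k - C (-(c + 1) * b⁻¹) ∧ -(c + 1) * b⁻¹ ≠ 0 := by
  have hbb : (C b⁻¹ : F[X]) * C b = 1 := by
    rw [← C_mul, inv_mul_cancel₀ hb, C_1]
  obtain ⟨a, ha⟩ : ∃ a, a = -(c + 1) * b⁻¹ := ⟨_, rfl⟩
  have hCa : (C a : F[X]) = -(C c + 1) * C b⁻¹ := by rw [ha]; simp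
  have h3 : g ∣ X ^ i - C a := by
    have h := (dvd_sub h1 h2).mul_left (C b⁻¹)
    have e : C b⁻¹ * (X ^ (2 * k) + 1 - (X ^ (2 * k) - C b * X ^ i - C c)) = X ^ i - C a := by
      rw [hCa]; linear_combination (X ^ i) * hbb
    rwa [e] at h
  have hnu : ¬ IsUnit g := fun hu => by
    have := natDegree_eq_zero_of_isUnit hu
    omega
  have hsplit : (X : F[X]) ^ (2 * k) = X ^ i * X ^ (2 * k - i) := by
    rw [← pow_add]; congr 1; omega
  have h4 : g ∣ C a * X ^ (2 * k - i) + 1 := by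
    have h := dvd_sub h1 (h3.mul_right (X ^ (2 * k - i)))
    rw [hsplit] at h
    convert h using 1
    ring
  have ha0 : a ≠ 0 := by
    rintro h0
    rw [h0, C_0, zero_mul, zero_add] at h4
    exact hnu (isUnit_of_dvd_one h4)
  have h5 : g ∣ X ^ (2 * k - i) - C (-a⁻¹) := by
    have h := h4.mul_left (C a⁻¹)
    have haa : (C a⁻¹ : F[X]) * C a = 1 := by
      rw [← C_mul, inv_mul_cancel₀ ha0, C_1]
    convert h using 1
    rw [C_neg]
    linear_combination -(X ^ (2 * k - i)) * haa
  have d1 := natDegree_le_of_dvd h3 (X_pow_sub_C_ne_zero hi a)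
  have d2 := natDegree_le_of_dvd h5 (X_pow_sub_C_ne_zero (by omega) _)
  rw [natDegree_X_pow_sub_C, hdeg] at d1 d2
  have hik' : i = k := by omega
  rw [← ha]
  refine ⟨hik', ?_, ?_, ha0⟩
  · intro h
    rw [h] at ha
    simp at ha
    exact ha0 ha
  · rw [← hik']
    refine (eq_of_monic_of_dvd_of_natDegree_le hmonic (monic_X_pow_sub_C a hi.ne') h3 ?_).symm
    rw [natDegree_X_pow_sub_C, hdeg, hik']
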